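/- Let S be a factorizable inverse monoid with zero whose natural connection θ is a dual isomorphism from the semilattice of idempotents E onto a sublattice of L(G), where G is the group of units, and let Γ: 0 = e₀ ≤ e₁ ≤ ⋯ ≤ eₙ = 1 be a chain of central idempotents of S. Then Γ is a G-nilpotent series if and only if UF_{e_i,e_{i+1}} ⊆ Z(S) for all 0 ≤ i ≤ n−1, and Γ is a G-solvable series if and only if UF_{e_i,e_{i+1}} is an abelian group for all 0 ≤ i ≤ n−1. -/

import Mathlib

/-- An inverse monoid: a monoid in which every element `a` has an inverse `a⁻¹`
satisfying `a * a⁻¹ * a = a` and `a⁻¹ * a * a⁻¹ = a⁻¹`, and this inverse is unique. -/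
class InverseMonoid (S : Type*) extends Monoid S, Inv S where
  mul_inv_mul : ∀ a : S, a * a⁻¹ * a = a
  inv_mul_inv : ∀ a : S, a⁻¹ * a * a⁻¹ = a⁻¹
  inv_unique : ∀ a b : S, a * b * a = a → b * a * b = b → b = a⁻¹

/-- An inverse monoid with a (two-sided absorbing) zero element. -/
class InverseMonoidWithZero (S : Type*) extends InverseMonoid S, Zero S where
  zero_mul : ∀ a : S, 0 * a = 0
  mul_zero : ∀ a : S, a * 0 = 0

/-- The natural partial order on an inverse monoid: `a ≤ b` iff `a = e * b`
for some idempotent `e`. -/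
def NatLe {S : Type*} [Monoid S] (a b : S) : Prop :=
  ∃ e : S, IsIdempotentElem e ∧ a = e * b

/-- The filter `e↑ = {s | e ≤ s}` generated by `e`. -/
def upfilter {S : Type*} [Monoid S] (e : S) : Set S := {s | NatLe e s}

/-- `c` is central in (a subset) `T`: it belongs to `T` and commutes with all elements of `T`. -/
def CentralIn {S : Type*} [Mul S] (T : Set S) (c : S) : Prop :=
  c ∈ T ∧ ∀ s ∈ T, c * s = s * c

/-- A monoid is factorizable if every element is a product of an idempotent and a unit. -/
def Factorizable (S : Type*) [Monoid S] : Prop :=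
  ∀ s : S, ∃ e g : S, IsIdempotentElem e ∧ IsUnit g ∧ s = e * g

/-- The natural connection `θ`: for an (idempotent) `e`, the subgroup
`eθ = {g ∈ G : e * g = e}` of the group of units. -/
def natconn {S : Type*} [Monoid S] (e : S) : Subgroup Sˣ where
  carrier := {g : Sˣ | e * (g : S) = e}
  one_mem' := by simp
  mul_mem' := by
    intro a b ha hb
    simp only [Set.mem_setOf_eq, Units.val_mul] at *
    rw [← mul_assoc, ha, hb]
  inv_mem' := by
    intro a ha
    simp only [Set.mem_setOf_eq] at *
    nth_rewrite 1 [← ha]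
    rw [mul_assoc, ← Units.val_mul, mul_inv_cancel, Units.val_one, mul_one]

/-- The natural connection is a dual isomorphism from the idempotents onto a
sublattice of the lattice of subgroups of the group of units: it is injective on
idempotents, order-reversing in both directions, and its image is closed under
joins and meets of subgroups. -/
def NatconnDualIso (S : Type*) [Monoid S] : Prop :=
  (∀ e f : S, IsIdempotentElem e → IsIdempotentElem f → natconn e = natconn f → e = f) ∧
  (∀ e f : S, IsIdempotentElem e → IsIdempotentElem f →
    (NatLe e f ↔ natconn f ≤ natconn e)) ∧
  (∀ e f : S, IsIdempotentElem e → IsIdempotentElem f →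
    (∃ h : S, IsIdempotentElem h ∧ natconn h = natconn e ⊔ natconn f) ∧
    (∃ h : S, IsIdempotentElem h ∧ natconn h = natconn e ⊓ natconn f))

/-- `j` is the join (least upper bound) of `e` and `f` with respect to the natural order. -/
def IsNatJoin {S : Type*} [Monoid S] (e f j : S) : Prop :=
  NatLe e j ∧ NatLe f j ∧ ∀ x : S, NatLe e x → NatLe f x → NatLe j x

/-- `F_{e,f} = f · e↑`. -/
def Fef {S : Type*} [Monoid S] (e f : S) : Set S := (f * ·) '' upfilter e

/-- `UF_{e,f}`: the group of units of the monoid `F_{e,f}` (whose identity is `f`). -/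
def UFef {S : Type*} [Monoid S] (e f : S) : Set S :=
  {x ∈ Fef e f | ∃ y ∈ Fef e f, x * y = f ∧ y * x = f}

/-- The centre of a subset `T`. -/
def ZIn {S : Type*} [Mul S] (T : Set S) : Set S := {x ∈ T | ∀ y ∈ T, x * y = y * x}

/-- Two subsets are isomorphic as semigroups (with the induced multiplication). -/
def SubIso {S : Type*} [Mul S] (A B : Set S) : Prop :=
  ∃ φ : S → S, Set.BijOn φ A B ∧ ∀ a ∈ A, ∀ b ∈ A, φ (a * b) = φ a * φ b

/-- A subcentral idempotent series between `0` and `a`. -/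
def IsSubcentralSeriesBetween {S : Type*} [Monoid S] [Zero S] (n : ℕ) (c : ℕ → S) (a : S) :
    Prop :=
  c 0 = 0 ∧ c n = a ∧ (∀ i ≤ n, IsIdempotentElem (c i)) ∧
    ∀ i < n, CentralIn (upfilter (c i)) (c (i + 1))

/-- A subcentral idempotent series of `S` (between `0` and `1`). -/
def IsSubcentralSeries {S : Type*} [Monoid S] [Zero S] (n : ℕ) (c : ℕ → S) : Prop :=
  IsSubcentralSeriesBetween n c 1

/-- A central idempotent series of `S`. -/
def IsCentralSeries {S : Type*} [Monoid S] [Zero S] (n : ℕ) (c : ℕ → S) : Prop :=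
  c 0 = 0 ∧ c n = 1 ∧ (∀ i ≤ n, IsIdempotentElem (c i)) ∧
    (∀ i < n, NatLe (c i) (c (i + 1))) ∧
    ∀ i < n, CentralIn Set.univ (c (i + 1))

/-- A subcentral idempotent: one occurring in some subcentral idempotent series of `S`. -/
def IsSubcentralIdem {S : Type*} [Monoid S] [Zero S] (e : S) : Prop :=
  ∃ (n : ℕ) (c : ℕ → S), IsSubcentralSeries n c ∧ ∃ i ≤ n, c i = e

/-- A `G`-nilpotent series: a chain of central idempotents from `0` to `1` with
`F_{eᵢ,eᵢ₊₁} ⊆ Z(F_{0,eᵢ₊₁})`. -/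
def GNilpotentSeries {S : Type*} [Monoid S] [Zero S] (n : ℕ) (c : ℕ → S) : Prop :=
  c 0 = 0 ∧ c n = 1 ∧ (∀ i ≤ n, IsIdempotentElem (c i) ∧ CentralIn Set.univ (c i)) ∧
    (∀ i < n, NatLe (c i) (c (i + 1))) ∧
    ∀ i < n, Fef (c i) (c (i + 1)) ⊆ ZIn (Fef 0 (c (i + 1)))

/-- A `G`-solvable series: a chain of central idempotents from `0` to `1` with
each `F_{eᵢ,eᵢ₊₁}` commutative. -/
def GSolvableSeries {S : Type*} [Monoid S] [Zero S] (n : ℕ) (c : ℕ → S) : Prop :=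
  c 0 = 0 ∧ c n = 1 ∧ (∀ i ≤ n, IsIdempotentElem (c i) ∧ CentralIn Set.univ (c i)) ∧
    (∀ i < n, NatLe (c i) (c (i + 1))) ∧
    ∀ i < n, ∀ x ∈ Fef (c i) (c (i + 1)), ∀ y ∈ Fef (c i) (c (i + 1)), x * y = y * x

/-- `S` is `G`-nilpotent. -/
def GNilpotent (S : Type*) [Monoid S] [Zero S] : Prop :=
  ∃ (n : ℕ) (c : ℕ → S), GNilpotentSeries n c

/-- `S` is `G`-solvable. -/
def GSolvable (S : Type*) [Monoid S] [Zero S] : Prop :=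
  ∃ (n : ℕ) (c : ℕ → S), GSolvableSeries n c

/-- Two idempotent series are isomorphic: same length, and a one-to-one correspondence
between their factors under which corresponding factors are isomorphic. -/
def SeriesIso {S : Type*} [Monoid S] (n : ℕ) (c : ℕ → S) (n' : ℕ) (d : ℕ → S) : Prop :=
  n = n' ∧ ∃ σ : ℕ → ℕ, Set.BijOn σ {i | i < n} {i | i < n'} ∧
    ∀ i < n, SubIso (Fef (c i) (c (i + 1))) (Fef (d (σ i)) (d (σ i + 1)))

/-- A composition series (for a kind `P` of series): it has no repeated terms, and any
refinement of it (of the same kind) only repeats its terms. -/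
def IsCompositionOf {S : Type*} (P : ℕ → (ℕ → S) → Prop) (n : ℕ) (c : ℕ → S) : Prop :=
  P n c ∧ (∀ i ≤ n, ∀ j ≤ n, c i = c j → i = j) ∧
    ∀ (m : ℕ) (d : ℕ → S), P m d → (∀ i ≤ n, ∃ j ≤ m, d j = c i) →
      ∀ j ≤ m, ∃ i ≤ n, d j = c i

/-!
Write `N = eθ` for the subgroup of units fixing `e`. For central idempotents `e ≤ f`, every element
of `F_{e,f}` is `p · fg` with `p` an idempotent in `[e, f]` and `g ∈ N`, and `fg` lies in
`UF_{e,f}`. So it is enough to see that `p` commutes with every unit `u` that commutes with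
`UF_{e,f}`. Such a `u` commutes with `fv` for `v ∈ N`, so `p · uvu⁻¹ = pv` for these `v`; hence `u`
normalizes `pθ ≤ N`. Thus `p` and `u⁻¹pu` have the same image under `θ`, and they are
equal because `θ` is injective.
-/

section Monoid

variable {S : Type*} [Monoid S] {e f p : S} {u v : Sˣ}

theorem centralIn_univ_iff : CentralIn Set.univ e ↔ e ∈ Submonoid.center S := by
  simp [CentralIn, Submonoid.mem_center_iff, eq_comm]

theorem ZIn_univ : ZIn (Set.univ : Set S) = Submonoid.center S :=
  Set.ext fun _ ↦ centralIn_univ_iff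

theorem commute_of_mem_center (he : e ∈ Submonoid.center S) (s : S) : Commute e s :=
  (Submonoid.mem_center_iff.mp he s).symm

theorem commute_mul_iff_of_mem_center (hfc : f ∈ Submonoid.center S) (hpf : p * f = p) {s : S} :
    Commute p (f * s) ↔ Commute p s := by
  rw [commute_iff_eq, commute_iff_eq, ← mul_assoc, hpf, (commute_of_mem_center hfc s).eq, mul_assoc,
    (commute_of_mem_center hfc p).eq, hpf]

theorem mul_eq_of_mem_Fef (hf : IsIdempotentElem f) (hfc : f ∈ Submonoid.center S)
    (hp : p ∈ Fef e f) : p * f = p := by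
  obtain ⟨s, -, rfl⟩ := hp
  rw [← (commute_of_mem_center hfc (f * s)).eq, ← mul_assoc, hf.eq]

theorem mem_natconn : v ∈ natconn e ↔ e * v = e := Iff.rfl

theorem natconn_le_of_mul_eq (hep : e * p = e) : natconn p ≤ natconn e := fun v hv ↦ by
  rw [mem_natconn] at hv ⊢
  rw [← hep, mul_assoc, hv]

theorem mem_natconn_conj : v ∈ natconn (↑u⁻¹ * p * u) ↔ u * v * u⁻¹ ∈ natconn p := by
  simp only [mem_natconn, mul_assoc, Units.val_mul, Units.mul_right_inj]
  simp only [← mul_assoc, Units.mul_inv_eq_iff_eq_mul]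

theorem conj_mem_natconn_iff (he : e ∈ Submonoid.center S) :
    u * v * u⁻¹ ∈ natconn e ↔ v ∈ natconn e := by
  rw [← mem_natconn_conj, mul_assoc, (commute_of_mem_center he u).eq, Units.inv_mul_cancel_left]

theorem isIdempotentElem_conj (hp : IsIdempotentElem p) (u : Sˣ) :
    IsIdempotentElem (↑u⁻¹ * p * u : S) := by
  simp only [IsIdempotentElem, mul_assoc, Units.mul_inv_cancel_left]
  rw [← mul_assoc p p, hp.eq]

theorem commute_of_mem_normalizer_natconn
    (hθ : Set.InjOn natconn {e : S | IsIdempotentElem e}) (hp : IsIdempotentElem p)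
    (hu : u ∈ Subgroup.normalizer (natconn p : Set Sˣ)) : Commute p u := by
  have hconj : natconn (↑u⁻¹ * p * u) = natconn p := Subgroup.ext fun v ↦
    mem_natconn_conj.trans (Subgroup.mem_normalizer_iff.mp hu v).symm
  have hfix : ↑u⁻¹ * p * u = p := hθ (isIdempotentElem_conj hp u) hp hconj
  rwa [mul_assoc, Units.inv_mul_eq_iff_eq_mul] at hfix

theorem mem_normalizer_natconn (he : e ∈ Submonoid.center S) (hep : e * p = e) (hpf : p * f = p)
    (hu : ∀ v ∈ natconn e, Commute (f * (v : S)) u) :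
    u ∈ Subgroup.normalizer (natconn p : Set Sˣ) := by
  have hle : natconn p ≤ natconn e := natconn_le_of_mul_eq hep
  have hfu : Commute f u := by simpa using hu 1 (one_mem _)
  have hconj (v : Sˣ) (hv : v ∈ natconn e) : p * ↑(u * v * u⁻¹) = p * v := by
    calc p * ↑(u * v * u⁻¹) = p * (f * u) * v * ↑u⁻¹ := by
          simp only [Units.val_mul, ← mul_assoc, hpf]
      _ = p * (u * (f * v)) * ↑u⁻¹ := by simp only [hfu.eq, mul_assoc]
      _ = p * f * v := by rw [← (hu v hv).eq]; simp [mul_assoc]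
      _ = p * v := by rw [hpf]
  refine Subgroup.mem_normalizer_iff.mpr fun v ↦ ?_
  by_cases hv : v ∈ natconn e
  · simp only [mem_natconn, hconj v hv]
  · exact iff_of_false (fun h ↦ hv (hle h)) fun h ↦ hv ((conj_mem_natconn_iff he).mp (hle h))

theorem UFef_subset_Fef : UFef e f ⊆ Fef e f := Set.sep_subset _ _

theorem mul_unit_mem_UFef (he : IsIdempotentElem e) (hf : IsIdempotentElem f)
    (hfc : f ∈ Submonoid.center S) (hv : v ∈ natconn e) : f * (v : S) ∈ UFef e f := by
  have hmem (w : Sˣ) (hw : w ∈ natconn e) : f * (w : S) ∈ Fef e f :=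
    ⟨w, ⟨e, he, hw.symm⟩, rfl⟩
  have hmul (w w' : Sˣ) (h : w * w' = 1) : f * (w : S) * (f * w') = f := by
    rw [(commute_of_mem_center hfc w').eq, mul_assoc, ← mul_assoc (w : S), ← Units.val_mul, h,
      Units.val_one, one_mul, hf.eq]
  exact ⟨hmem v hv, f * ↑v⁻¹, hmem v⁻¹ (inv_mem hv), hmul _ _ (mul_inv_cancel v),
    hmul _ _ (inv_mul_cancel v)⟩

theorem commute_unit_of_commute_UFef (hθ : Set.InjOn natconn {e : S | IsIdempotentElem e})
    (he : IsIdempotentElem e) (hec : e ∈ Submonoid.center S)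
    (hf : IsIdempotentElem f) (hfc : f ∈ Submonoid.center S)
    (hp : IsIdempotentElem p) (hep : e * p = e) (hpf : p * f = p)
    (hu : ∀ x ∈ UFef e f, Commute x u) : Commute p u :=
  commute_of_mem_normalizer_natconn hθ hp <| mem_normalizer_natconn hec hep hpf fun _ hv ↦
    hu _ (mul_unit_mem_UFef he hf hfc hv)

end Monoid

namespace InverseMonoid

variable {S : Type*} [InverseMonoid S] {e f k s : S}

protected theorem inv_inv (a : S) : a⁻¹⁻¹ = a :=
  (inv_unique a⁻¹ a (inv_mul_inv a) (mul_inv_mul a)).symm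

theorem inv_eq_self_of_isIdempotentElem (he : IsIdempotentElem e) : e⁻¹ = e :=
  (inv_unique e e (by rw [he.eq, he.eq]) (by rw [he.eq, he.eq])).symm

theorem isIdempotentElem_mul (he : IsIdempotentElem e) (hf : IsIdempotentElem f) :
    IsIdempotentElem (e * f) := by
  set x := (e * f)⁻¹ with hx
  have hxx : x * (e * f) * x = x := inv_mul_inv (e * f)
  have hx_eq : f * x * e = x := by
    apply inv_unique
    · calc e * f * (f * x * e) * (e * f) = e * (f * f) * x * (e * e) * f := by
            simp only [mul_assoc]
        _ = e * f * x * (e * f) := by rw [he.eq, hf.eq]; simp only [mul_assoc]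
        _ = e * f := mul_inv_mul (e * f)
    · calc f * x * e * (e * f) * (f * x * e) = f * (x * ((e * e) * (f * f)) * x) * e := by
            simp only [mul_assoc]
        _ = f * x * e := by rw [he.eq, hf.eq, hxx]
  have hx_idem : IsIdempotentElem x := by
    calc x * x = f * x * e * (f * x * e) := by rw [hx_eq]
      _ = f * (x * (e * f) * x) * e := by simp only [mul_assoc]
      _ = x := by rw [hxx, hx_eq]
  rwa [← InverseMonoid.inv_inv (e * f), ← hx, inv_eq_self_of_isIdempotentElem hx_idem]

theorem commute_of_isIdempotentElem (he : IsIdempotentElem e) (hf : IsIdempotentElem f) :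
    Commute e f := by
  have hmul (a b : S) (ha : IsIdempotentElem a) (hb : IsIdempotentElem b) :
      a * b * (b * a) * (a * b) = a * b := by
    calc a * b * (b * a) * (a * b) = a * (b * b) * (a * a) * b := by simp only [mul_assoc]
      _ = a * b * (a * b) := by rw [ha.eq, hb.eq]; simp only [mul_assoc]
      _ = a * b := isIdempotentElem_mul ha hb
  have hinv : f * e = (e * f)⁻¹ := inv_unique _ _ (hmul e f he hf) (hmul f e hf he)
  rw [commute_iff_eq, hinv, inv_eq_self_of_isIdempotentElem (isIdempotentElem_mul he hf)]

theorem natLe_iff_mul_eq (he : IsIdempotentElem e) : NatLe e s ↔ e * s = e := by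
  refine ⟨?_, fun h ↦ ⟨e, he, h.symm⟩⟩
  rintro ⟨k, hk, hks⟩
  have hek : e * k = e := by
    rw [(commute_of_isIdempotentElem he hk).eq, hks, ← mul_assoc, hk.eq]
  calc e * s = e * k * s := by rw [hek]
    _ = e := by rw [mul_assoc, ← hks, he.eq]

theorem mul_idem_mul_unit_eq_iff (he : IsIdempotentElem e) (hk : IsIdempotentElem k) {g : Sˣ} :
    e * (k * g) = e ↔ e * k = e ∧ e * g = e := by
  refine ⟨fun h ↦ ?_, fun ⟨hek, heg⟩ ↦ by rw [← mul_assoc, hek, heg]⟩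
  have hek : e * k = e := by
    calc e * k = e * k * e := by
          rw [mul_assoc, (commute_of_isIdempotentElem hk he).eq, ← mul_assoc, he.eq]
      _ = e * k * (e * k * g) := by rw [mul_assoc e k g, h]
      _ = e := by rw [← mul_assoc, (isIdempotentElem_mul he hk).eq, mul_assoc, h]
  rw [← mul_assoc, hek] at h
  exact ⟨hek, h⟩

end InverseMonoid

section Factorizable

open InverseMonoid

variable {S : Type*} [InverseMonoid S] {e f x : S}

theorem exists_idem_mul_unit_of_mem_Fef (hfact : Factorizable S)
    (he : IsIdempotentElem e) (hf : IsIdempotentElem f) (hef : e * f = e) (hx : x ∈ Fef e f) :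
    ∃ (p : S) (g : Sˣ), IsIdempotentElem p ∧ e * p = e ∧ p * f = p ∧ g ∈ natconn e ∧
      x = p * (f * g) := by
  obtain ⟨s, hes, rfl⟩ := hx
  obtain ⟨k, _, hk, ⟨g, rfl⟩, rfl⟩ := hfact s
  obtain ⟨hek, heg⟩ := (mul_idem_mul_unit_eq_iff he hk).mp ((natLe_iff_mul_eq he).mp hes)
  have hpf : f * k * f = f * k := by
    rw [mul_assoc, (commute_of_isIdempotentElem hk hf).eq, ← mul_assoc, hf.eq]
  refine ⟨f * k, g, isIdempotentElem_mul hf hk, ?_, hpf, heg, ?_⟩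
  · rw [← mul_assoc, hef, hek]
  · rw [← mul_assoc, hpf, mul_assoc]

theorem Fef_subset_center_iff (hfact : Factorizable S)
    (hθ : Set.InjOn natconn {e : S | IsIdempotentElem e})
    (he : IsIdempotentElem e) (hec : e ∈ Submonoid.center S)
    (hf : IsIdempotentElem f) (hfc : f ∈ Submonoid.center S) (hef : e * f = e) :
    Fef e f ⊆ Submonoid.center S ↔ UFef e f ⊆ Submonoid.center S := by
  refine ⟨UFef_subset_Fef.trans, fun hUF x hx ↦ ?_⟩
  obtain ⟨p, g, hp, hep, hpf, hg, rfl⟩ := exists_idem_mul_unit_of_mem_Fef hfact he hf hef hx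
  have hp_unit (u : Sˣ) : Commute p u :=
    commute_unit_of_commute_UFef hθ he hec hf hfc hp hep hpf fun x hx ↦
      commute_of_mem_center (hUF hx) u
  have hpc : p ∈ Submonoid.center S := Submonoid.mem_center_iff.mpr fun s ↦ by
    obtain ⟨k, _, hk, ⟨u, rfl⟩, rfl⟩ := hfact s
    exact ((commute_of_isIdempotentElem hp hk).mul_right (hp_unit u)).symm
  exact mul_mem hpc (hUF (mul_unit_mem_UFef he hf hfc hg))

theorem Fef_commute_iff (hfact : Factorizable S)
    (hθ : Set.InjOn natconn {e : S | IsIdempotentElem e})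
    (he : IsIdempotentElem e) (hec : e ∈ Submonoid.center S)
    (hf : IsIdempotentElem f) (hfc : f ∈ Submonoid.center S) (hef : e * f = e) :
    (∀ x ∈ Fef e f, ∀ y ∈ Fef e f, Commute x y) ↔
      ∀ x ∈ UFef e f, ∀ y ∈ UFef e f, Commute x y := by
  refine ⟨fun h x hx y hy ↦ h x hx.1 y hy.1, fun hUF x hx y hy ↦ ?_⟩
  have hU {v : Sˣ} (hv : v ∈ natconn e) : f * (v : S) ∈ UFef e f := mul_unit_mem_UFef he hf hfc hv
  have hUF_unit {v : Sˣ} (hv : v ∈ natconn e) (z : S) (hz : z ∈ UFef e f) : Commute z v :=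
    (commute_mul_iff_of_mem_center hfc (mul_eq_of_mem_Fef hf hfc hz.1)).mp (hUF z hz _ (hU hv))
  have hidem_unit {p : S} {v : Sˣ} (hp : IsIdempotentElem p) (hep : e * p = e) (hpf : p * f = p)
      (hv : v ∈ natconn e) : Commute p (f * v) :=
    (commute_of_isIdempotentElem hp hf).mul_right <|
      commute_unit_of_commute_UFef hθ he hec hf hfc hp hep hpf (hUF_unit hv)
  obtain ⟨p, g, hp, hep, hpf, hg, rfl⟩ := exists_idem_mul_unit_of_mem_Fef hfact he hf hef hx
  obtain ⟨q, w, hq, heq, hqf, hw, rfl⟩ := exists_idem_mul_unit_of_mem_Fef hfact he hf hef hy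
  exact ((commute_of_isIdempotentElem hp hq).mul_right (hidem_unit hp hep hpf hw)).mul_left
    ((hidem_unit hq heq hqf hg).symm.mul_right (hUF _ (hU hg) _ (hU hw)))

end Factorizable

section Zero

variable {S : Type*} [InverseMonoidWithZero S] {e f : S}

theorem zero_natLe (s : S) : NatLe 0 s :=
  ⟨0, InverseMonoidWithZero.zero_mul 0, (InverseMonoidWithZero.zero_mul s).symm⟩

theorem Fef_subset_ZIn_Fef_zero_iff (hf : IsIdempotentElem f) (hfc : f ∈ Submonoid.center S) :
    Fef e f ⊆ ZIn (Fef 0 f) ↔ Fef e f ⊆ Submonoid.center S := by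
  refine forall₂_congr fun x hx ↦ ?_
  have hx_commute {s : S} : Commute x (f * s) ↔ Commute x s :=
    commute_mul_iff_of_mem_center hfc (mul_eq_of_mem_Fef hf hfc hx)
  rw [SetLike.mem_coe, Submonoid.mem_center_iff]
  constructor
  · exact fun h s ↦ (hx_commute.mp (h.2 _ ⟨s, zero_natLe s, rfl⟩)).symm
  · intro h
    obtain ⟨t, -, rfl⟩ := hx
    exact ⟨⟨t, zero_natLe t, rfl⟩, fun y _ ↦ (h y).symm⟩

end Zero

theorem stmt_11_general {S : Type*} [InverseMonoidWithZero S] (hfact : Factorizable S)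
    (hθ : Set.InjOn natconn {e : S | IsIdempotentElem e}) (n : ℕ) (c : ℕ → S)
    (h0 : c 0 = 0) (h1 : c n = 1)
    (hidem : ∀ i ≤ n, IsIdempotentElem (c i) ∧ CentralIn Set.univ (c i))
    (hchain : ∀ i < n, NatLe (c i) (c (i + 1))) :
    (GNilpotentSeries n c ↔ ∀ i < n, UFef (c i) (c (i + 1)) ⊆ ZIn Set.univ) ∧
    (GSolvableSeries n c ↔
      ∀ i < n, ∀ x ∈ UFef (c i) (c (i + 1)), ∀ y ∈ UFef (c i) (c (i + 1)),
        x * y = y * x) := by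
  simp only [GNilpotentSeries, GSolvableSeries, and_iff_right h0, and_iff_right h1,
    and_iff_right hidem, and_iff_right hchain, ZIn_univ]
  have hcenter (i : ℕ) (hi : i ≤ n) : c i ∈ Submonoid.center S :=
    centralIn_univ_iff.mp (hidem i hi).2
  have hle (i : ℕ) (hi : i < n) : c i * c (i + 1) = c i :=
    (InverseMonoid.natLe_iff_mul_eq (hidem i hi.le).1).mp (hchain i hi)
  refine ⟨forall₂_congr fun i hi ↦ ?_, forall₂_congr fun i hi ↦ ?_⟩
  · exact (Fef_subset_ZIn_Fef_zero_iff (hidem _ hi).1 (hcenter _ hi)).trans <|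
      Fef_subset_center_iff hfact hθ (hidem i hi.le).1 (hcenter i hi.le)
        (hidem _ hi).1 (hcenter _ hi) (hle i hi)
  · exact Fef_commute_iff hfact hθ (hidem i hi.le).1 (hcenter i hi.le)
      (hidem _ hi).1 (hcenter _ hi) (hle i hi)

/-- Let `Γ : 0 = e₀ ≤ e₁ ≤ ⋯ ≤ eₙ = 1` be a chain of central idempotents
of a factorizable inverse monoid with zero whose natural connection is a dual
isomorphism onto a sublattice of the lattice of subgroups of the group of units.
Then `Γ` is a `G`-nilpotent series iff `UF_{eᵢ,eᵢ₊₁} ⊆ Z(S)` for all `i < n`, and `Γ`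
is a `G`-solvable series iff each `UF_{eᵢ,eᵢ₊₁}` is an abelian group. -/
theorem stmt_11 {S : Type*} [InverseMonoidWithZero S] (hfact : Factorizable S)
    (hθ : NatconnDualIso S) (n : ℕ) (c : ℕ → S)
    (h0 : c 0 = 0) (h1 : c n = 1)
    (hidem : ∀ i ≤ n, IsIdempotentElem (c i) ∧ CentralIn Set.univ (c i))
    (hchain : ∀ i < n, NatLe (c i) (c (i + 1))) :
    (GNilpotentSeries n c ↔ ∀ i < n, UFef (c i) (c (i + 1)) ⊆ ZIn Set.univ) ∧
    (GSolvableSeries n c ↔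
      ∀ i < n, ∀ x ∈ UFef (c i) (c (i + 1)), ∀ y ∈ UFef (c i) (c (i + 1)),
        x * y = y * x) :=
  stmt_11_general hfact (fun e he f hf ↦ hθ.1 e f he hf) n c h0 h1 hidem hchain
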